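/- Let a : 𝒲 → ℝ satisfy a(u) > 0 for all u ∈ 𝒲 and Σ_{u∈𝒲} a(u)/g(∅,u) < ∞ (equivalently Σ_{u∈𝒲} a(u)/m(u) < ∞). Then for all v, w ∈ 𝒲 the series ρ(v,w) := Σ_{u∈𝒲} a(u)·|k(u,v) − k(u,w)| converges, and ρ is a metric on 𝒲: ρ(v,w) ≥ 0 with ρ(v,w) = 0 if and only if v = w, ρ(v,w) = ρ(w,v), and ρ(v,w) ≤ ρ(v,x) + ρ(x,w) for all x ∈ 𝒲. -/

import Mathlib

open Classical

namespace Martin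

/-- Finite words over the alphabet `Fin N` (the empty list is the empty word `∅`;
`w ++ [i]` is the word `wi` and `w.dropLast` is the parent `w⁻`). -/
abbrev Word (N : ℕ) := List (Fin N)

/-- The mass of a word: `m(w₁⋯wₙ) = m(w₁)⋯m(wₙ)`, `m(∅) = 1`. -/
noncomputable def mW {N : ℕ} (m : Fin N → ℝ) (w : Word N) : ℝ := (w.map m).prod

/-- Total mass of the equivalence class of `v`: `Σ_{v̂ ∼ v} m(v̂)`. -/
noncomputable def massCl {N : ℕ} (sim : Word N → Word N → Prop) (m : Fin N → ℝ)
    (v : Word N) : ℝ :=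
  ∑ᶠ u ∈ {u : Word N | sim u v}, mW m u

/-- Transition probability: `p(v,w) = m(w)/(Σ_{v̂∼v} m(v̂))` if `w = v̂i` for some
`v̂ ∼ v`, `i ∈ 𝒜`, and `0` otherwise. -/
noncomputable def pTrans {N : ℕ} (sim : Word N → Word N → Prop) (m : Fin N → ℝ)
    (v w : Word N) : ℝ :=
  if ∃ v' : Word N, ∃ i : Fin N, sim v' v ∧ w = v' ++ [i] then mW m w / massCl sim m v
  else 0

/-- `n`-step transition probabilities: `p₀(v,w) = δ_v(w)`,
`pₙ(v,w) = Σ_u pₙ₋₁(v,u) p(u,w)`. -/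
noncomputable def pn {N : ℕ} (sim : Word N → Word N → Prop) (m : Fin N → ℝ) :
    ℕ → Word N → Word N → ℝ
  | 0, v, w => if w = v then 1 else 0
  | n + 1, v, w => ∑ᶠ u : Word N, pn sim m n v u * pTrans sim m u w

/-- The Green function `g(v,w) = p_{|w|−|v|}(v,w)` (it equals `0` when `|w| < |v|`,
by truncated subtraction and since then `v ≠ w`). -/
noncomputable def green {N : ℕ} (sim : Word N → Word N → Prop) (m : Fin N → ℝ)
    (v w : Word N) : ℝ :=
  pn sim m (w.length - v.length) v w

/-- The function `q(v,w) = g(v,w)·(Σ_{v̂∼v} m(v̂))/m(w)` for `v ≠ w`, `q(v,v) = 1`. -/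
noncomputable def qfun {N : ℕ} (sim : Word N → Word N → Prop) (m : Fin N → ℝ)
    (v w : Word N) : ℝ :=
  if v = w then 1 else green sim m v w * massCl sim m v / mW m w

/-- The Martin kernel `k(v,w) = g(v,w)/g(∅,w)`. -/
noncomputable def mkernel {N : ℕ} (sim : Word N → Word N → Prop) (m : Fin N → ℝ)
    (v w : Word N) : ℝ :=
  green sim m v w / green sim m [] w

/-- `R(w)`: the number of words equivalent to `w`. -/
noncomputable def Rnum {N : ℕ} (sim : Word N → Word N → Prop) (w : Word N) : ℕ :=
  Set.ncard {u : Word N | sim u w}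

/-- Assumption (B2): for every word `w`, either all equivalent words have the same mass,
or all equivalent words have equivalent parents. -/
def B2 {N : ℕ} (sim : Word N → Word N → Prop) (m : Fin N → ℝ) : Prop :=
  ∀ w : Word N, (∀ w', sim w' w → mW m w' = mW m w) ∨
    (∀ w', sim w' w → sim w'.dropLast w.dropLast)


/-- The Martin metric `ρ(v,w) = Σ_{u∈𝒲} a(u)·|k(u,v) − k(u,w)|`. -/
noncomputable def rho {N : ℕ} (sim : Word N → Word N → Prop) (m : Fin N → ℝ)
    (a : Word N → ℝ) (v w : Word N) : ℝ :=
  ∑' u : Word N, a u * |mkernel sim m u v - mkernel sim m u w|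

/-!
The kernel `k(·, w)` vanishes at every word `u ≠ w` at least as long as `w`. Hence each `k(·, w)`
has finite support, the series for `ρ` is a finite sum, and `ρ` is a weighted `ℓ¹` distance between
the functions `k(·, v)` and `k(·, w)`. What remains is that `w` is determined by `k(·, w)`: if
`|v| ≤ |w|` and `v ≠ w`, then `k(w, v) = 0`, whereas `k(w, w) = 1 / m(w)` because
`g(∅, w) = m(w)`.
-/

section WeightedL1

variable {ι : Type*} {a f g h : ι → ℝ}

theorem tsum_mul_abs_sub_le_add (ha : ∀ i, 0 ≤ a i)
    (hfg : Summable fun i => a i * |f i - g i|) (hgh : Summable fun i => a i * |g i - h i|) :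
    ∑' i, a i * |f i - h i| ≤ ∑' i, a i * |f i - g i| + ∑' i, a i * |g i - h i| := by
  have triangle (i : ι) : a i * |f i - h i| ≤ a i * |f i - g i| + a i * |g i - h i| := by
    rw [← mul_add]
    exact mul_le_mul_of_nonneg_left (abs_sub_le _ _ _) (ha i)
  have hfh : Summable fun i => a i * |f i - h i| :=
    (hfg.add hgh).of_nonneg_of_le (fun i => mul_nonneg (ha i) (abs_nonneg _)) triangle
  rw [← hfg.tsum_add hgh]
  exact hfh.tsum_le_tsum triangle (hfg.add hgh)

theorem tsum_mul_abs_sub_eq_zero_iff (ha : ∀ i, 0 < a i)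
    (hfg : Summable fun i => a i * |f i - g i|) :
    ∑' i, a i * |f i - g i| = 0 ↔ f = g := by
  rw [← hfg.hasSum_iff,
    hasSum_zero_iff_of_nonneg fun i => mul_nonneg (ha i).le (abs_nonneg _)]
  simp [funext_iff, (ha _).ne', sub_eq_zero]

end WeightedL1

section MartinKernel

variable {N : ℕ} {sim : Word N → Word N → Prop} {m : Fin N → ℝ}

theorem mW_pos (hm : ∀ i, 0 < m i) (w : Word N) : 0 < mW m w :=
  List.prod_pos (by simpa using fun i _ => hm i)

theorem massCl_pos (hm : ∀ i, 0 < m i) {v : Word N} (hv : sim v v)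
    (hfin : {u : Word N | sim u v}.Finite) : 0 < massCl sim m v := by
  rw [massCl, finsum_mem_eq_finite_toFinset_sum _ hfin]
  exact Finset.sum_pos (fun u _ => mW_pos hm u) ⟨v, by simpa using hv⟩

theorem massCl_congr (hsim : Equivalence sim) {v w : Word N} (hvw : sim v w) :
    massCl sim m v = massCl sim m w := by
  have classes_eq : {u | sim u v} = {u | sim u w} :=
    Set.ext fun _ => ⟨fun h => hsim.trans h hvw, fun h => hsim.trans h (hsim.symm hvw)⟩
  rw [massCl, massCl, classes_eq]

theorem finite_setOf_sim (hlen : ∀ v w : Word N, sim v w → v.length = w.length) (v : Word N) :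
    {u : Word N | sim u v}.Finite :=
  (List.finite_length_eq (Fin N) v.length).subset fun u hu => hlen u v hu

theorem pTrans_append_singleton (u w : Word N) (i : Fin N) :
    pTrans sim m u (w ++ [i]) = if sim w u then mW m (w ++ [i]) / massCl sim m u else 0 := by
  refine if_congr ⟨?_, fun h => ⟨w, i, h, rfl⟩⟩ rfl rfl
  rintro ⟨v, j, hv, hw⟩
  rwa [(List.append_inj' hw rfl).1]

theorem pn_length_nil (hsim : Equivalence sim)
    (hlen : ∀ v w : Word N, sim v w → v.length = w.length) (hm : ∀ i, 0 < m i) (w : Word N) :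
    pn sim m w.length [] w = mW m w := by
  induction hn : w.length generalizing w with
  | zero => simp [List.length_eq_zero_iff.mp hn, pn, mW]
  | succ n ih =>
    obtain ⟨w, i, rfl⟩ :=
      w.eq_nil_or_concat'.resolve_left (List.ne_nil_of_length_eq_add_one hn)
    have hwn : w.length = n := by simpa using hn
    have summand_eq (u : Word N) :
        pn sim m n [] u * pTrans sim m u (w ++ [i]) =
          ∑ᶠ _ : u ∈ {u | sim u w}, mW m u * (mW m (w ++ [i]) / massCl sim m w) := by
      rw [pTrans_append_singleton]
      by_cases huw : sim u w
      · rw [if_pos (hsim.symm huw), ih u ((hlen u w huw).trans hwn), massCl_congr hsim huw]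
        simp [huw]
      · simp [huw, mt hsim.symm huw]
    calc pn sim m (n + 1) [] (w ++ [i])
        = ∑ᶠ u ∈ {u | sim u w}, mW m u * (mW m (w ++ [i]) / massCl sim m w) :=
          finsum_congr summand_eq
      _ = massCl sim m w * (mW m (w ++ [i]) / massCl sim m w) := (finsum_mem_mul _ _).symm
      _ = mW m (w ++ [i]) :=
          mul_div_cancel₀ _ (massCl_pos hm (hsim.refl w) (finite_setOf_sim hlen w)).ne'

theorem green_nil (hsim : Equivalence sim)
    (hlen : ∀ v w : Word N, sim v w → v.length = w.length) (hm : ∀ i, 0 < m i) (w : Word N) :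
    green sim m [] w = mW m w :=
  pn_length_nil hsim hlen hm w

theorem green_self (w : Word N) : green sim m w w = 1 := by
  simp [green, pn]

theorem green_eq_zero_of_length_le {v w : Word N} (hle : w.length ≤ v.length) (hne : w ≠ v) :
    green sim m v w = 0 := by
  simp [green, pn, Nat.sub_eq_zero_of_le hle, hne]

theorem mkernel_self (hsim : Equivalence sim)
    (hlen : ∀ v w : Word N, sim v w → v.length = w.length) (hm : ∀ i, 0 < m i) (w : Word N) :
    mkernel sim m w w = 1 / mW m w := by
  rw [mkernel, green_self, green_nil hsim hlen hm]

theorem mkernel_eq_zero_of_length_le {v w : Word N} (hle : w.length ≤ v.length) (hne : w ≠ v) :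
    mkernel sim m v w = 0 := by
  rw [mkernel, green_eq_zero_of_length_le hle hne, zero_div]

theorem mkernel_injective (hsim : Equivalence sim)
    (hlen : ∀ v w : Word N, sim v w → v.length = w.length) (hm : ∀ i, 0 < m i) :
    Function.Injective fun w u : Word N => mkernel sim m u w := by
  intro v w hvw
  wlog hle : v.length ≤ w.length generalizing v w
  · exact (this hvw.symm (le_of_not_ge hle)).symm
  by_contra hne
  have diagonal_eq_zero : mkernel sim m w w = 0 :=
    (congrFun hvw w).symm.trans (mkernel_eq_zero_of_length_le hle hne)
  rw [mkernel_self hsim hlen hm] at diagonal_eq_zero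
  exact (one_div_pos.mpr (mW_pos hm w)).ne' diagonal_eq_zero

theorem hasFiniteSupport_mkernel (w : Word N) :
    (fun u : Word N => mkernel sim m u w).HasFiniteSupport := by
  refine (List.finite_length_le (Fin N) w.length).subset fun u hu => ?_
  by_contra hlt
  have hwu : w.length < u.length := not_le.mp hlt
  exact hu (mkernel_eq_zero_of_length_le hwu.le (ne_of_apply_ne List.length hwu.ne))

theorem summable_mul_abs_mkernel_sub (a : Word N → ℝ) (v w : Word N) :
    Summable fun u : Word N => a u * |mkernel sim m u v - mkernel sim m u w| := by
  have hv : (fun u : Word N => mkernel sim m u v).HasFiniteSupport := hasFiniteSupport_mkernel v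
  have hw : (fun u : Word N => mkernel sim m u w).HasFiniteSupport := hasFiniteSupport_mkernel w
  exact summable_of_hasFiniteSupport (((hv.sub hw).fun_comp abs_zero).mul_right a)

theorem rho_nonneg {a : Word N → ℝ} (ha : ∀ u, 0 ≤ a u) (v w : Word N) : 0 ≤ rho sim m a v w :=
  tsum_nonneg fun u => mul_nonneg (ha u) (abs_nonneg _)

theorem rho_comm (a : Word N → ℝ) (v w : Word N) : rho sim m a v w = rho sim m a w v := by
  simp only [rho, abs_sub_comm]

theorem rho_triangle {a : Word N → ℝ} (ha : ∀ u, 0 ≤ a u) (v x w : Word N) :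
    rho sim m a v w ≤ rho sim m a v x + rho sim m a x w :=
  tsum_mul_abs_sub_le_add ha (summable_mul_abs_mkernel_sub a v x)
    (summable_mul_abs_mkernel_sub a x w)

theorem rho_eq_zero_iff (hsim : Equivalence sim)
    (hlen : ∀ v w : Word N, sim v w → v.length = w.length) (hm : ∀ i, 0 < m i)
    {a : Word N → ℝ} (ha : ∀ u, 0 < a u) (v w : Word N) :
    rho sim m a v w = 0 ↔ v = w :=
  (tsum_mul_abs_sub_eq_zero_iff ha (summable_mul_abs_mkernel_sub a v w)).trans
    (mkernel_injective hsim hlen hm).eq_iff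

theorem rho_is_metric_general (hsim : Equivalence sim)
    (hlen : ∀ v w : Word N, sim v w → v.length = w.length) (hm : ∀ i, 0 < m i)
    {a : Word N → ℝ} (ha : ∀ u, 0 < a u) :
    (∀ v w : Word N,
      Summable fun u : Word N => a u * |mkernel sim m u v - mkernel sim m u w|) ∧
    (∀ v w : Word N, 0 ≤ rho sim m a v w) ∧
    (∀ v w : Word N, rho sim m a v w = 0 ↔ v = w) ∧
    (∀ v w : Word N, rho sim m a v w = rho sim m a w v) ∧
    (∀ v x w : Word N, rho sim m a v w ≤ rho sim m a v x + rho sim m a x w) :=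
  ⟨summable_mul_abs_mkernel_sub a, rho_nonneg fun u => (ha u).le,
    rho_eq_zero_iff hsim hlen hm ha, rho_comm a, rho_triangle fun u => (ha u).le⟩

end MartinKernel

/-- if `a(u) > 0` and `Σ_u a(u)/g(∅,u) < ∞`, then the series defining
`ρ` converges and `ρ` is a metric on `𝒲`. -/
theorem rho_is_metric {N : ℕ} (hN : 2 ≤ N)
    (sim : Word N → Word N → Prop) (hsim : Equivalence sim)
    (hlen : ∀ v w : Word N, sim v w → v.length = w.length)
    (m : Fin N → ℝ) (hm : ∀ a, m a ∈ Set.Ioo (0 : ℝ) 1)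
    (hm1 : ∑ a, m a = 1)
    (a : Word N → ℝ) (ha : ∀ u, 0 < a u)
    (hsumm : Summable fun u : Word N => a u / green sim m ([] : Word N) u) :
    (∀ v w : Word N,
      Summable fun u : Word N => a u * |mkernel sim m u v - mkernel sim m u w|) ∧
    (∀ v w : Word N, 0 ≤ rho sim m a v w) ∧
    (∀ v w : Word N, rho sim m a v w = 0 ↔ v = w) ∧
    (∀ v w : Word N, rho sim m a v w = rho sim m a w v) ∧
    (∀ v x w : Word N, rho sim m a v w ≤ rho sim m a v x + rho sim m a x w) :=
  rho_is_metric_general hsim hlen (fun i => (hm i).1) ha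

end Martin
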